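/- Under the stated setup for the map T, the total derivative DT(x,t) exists for almost every (x,t) ∈ U, the function (x,t) ↦ |det DT(x,t)| is integrable on U, and ∫_U |det DT(x,t)| d(x,t) = ∫_{ℝ^d} #(T⁻¹({y})) dy, where #(T⁻¹({y})) ∈ ℕ ∪ {∞} is the cardinality of the fibre of T over y and the right-hand side is the Lebesgue integral of this extended-real-valued function. In particular, T⁻¹({y}) is a finite set for almost every y ∈ ℝ^d. -/

import Mathlib

open MeasureTheory ENNReal

noncomputable section

/-- The first `n` coordinates of `z ∈ ℝ^{n+1}`. -/
def xpart {n : ℕ} (z : EuclideanSpace ℝ (Fin (n + 1))) : EuclideanSpace ℝ (Fin n) :=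
  (EuclideanSpace.equiv (Fin n) ℝ).symm fun i => z i.castSucc

/-- The last coordinate of `z ∈ ℝ^{n+1}`. -/
def tlast {n : ℕ} (z : EuclideanSpace ℝ (Fin (n + 1))) : ℝ := z (Fin.last n)

/-- The vector `(x, c) ∈ ℝ^{n+1}` obtained by appending `c ∈ ℝ` to `x ∈ ℝ^n`. -/
def hvec {n : ℕ} (x : EuclideanSpace ℝ (Fin n)) (c : ℝ) : EuclideanSpace ℝ (Fin (n + 1)) :=
  (EuclideanSpace.equiv (Fin (n + 1)) ℝ).symm (Fin.snoc ((EuclideanSpace.equiv (Fin n) ℝ) x) c)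

/-- The coordinate transformation `T(x,t) = R(t)·(h(x,t) - k0(t)·s(t))`,
with `h(x,t) = (x, √(k0(t)² - |x|²))`, viewed as a map `ℝ^{n+1} → ℝ^{n+1}` via the
identification `ℝ^n × ℝ ≅ ℝ^{n+1}`. -/
def Tmap {n : ℕ} (k0 : ℝ → ℝ) (s : ℝ → EuclideanSpace ℝ (Fin (n + 1)))
    (R : ℝ → EuclideanSpace ℝ (Fin (n + 1)) →L[ℝ] EuclideanSpace ℝ (Fin (n + 1)))
    (z : EuclideanSpace ℝ (Fin (n + 1))) : EuclideanSpace ℝ (Fin (n + 1)) :=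
  R (tlast z)
    (hvec (xpart z) (Real.sqrt ((k0 (tlast z)) ^ 2 - ‖xpart z‖ ^ 2)) -
      k0 (tlast z) • s (tlast z))

/-- The parameter domain `U = {(x,t) : t ∈ [0,L], |x| < k0(t)}` viewed inside `ℝ^{n+1}`. -/
def Uset {n : ℕ} (L : ℝ) (k0 : ℝ → ℝ) : Set (EuclideanSpace ℝ (Fin (n + 1))) :=
  {z | tlast z ∈ Set.Icc 0 L ∧ ‖xpart z‖ < k0 (tlast z)}

/-!
Write `κ = √(k0(t)² - |x|²)`. Away from the exceptional times, `DT` is a uniformly bounded linear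
map plus the rank-one map `v ↦ dκ(v) R(t)e`, where `e` is the last basis vector and
`|dκ| = O(k0/κ)`. A determinant is affine in a rank-one perturbation, so `|det DT| = O(k0/κ)` as
well, rather than a higher power of `k0/κ`. By scaling, the integral of `k0/κ` over the ball
`|x| < k0(t)` is `k0(t)ⁿ` times that of `1/√(1-|x|²)` over the unit ball, which is finite; and
`k0`, like `s` and `R`, is bounded because its derivative is.

The area formula for non-injective maps follows from the one for injective maps by splitting
`{det DT ≠ 0}` into countably many pieces of injectivity and discarding the critical set, whose
image is null. The slices over exceptional times are null, and so are their images, since `T` maps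
each of them into a linear image of a sphere.
-/

section Fibres

variable {α β : Type*} {f : α → β} {s : Set α}

lemma toENNReal_encard_preimage_inter_eq_indicator (hf : Set.InjOn f s) (y : β) :
    ENat.toENNReal (f ⁻¹' {y} ∩ s).encard = (f '' s).indicator (fun _ ↦ (1 : ℝ≥0∞)) y := by
  by_cases hy : y ∈ f '' s
  · obtain ⟨x, hx, rfl⟩ := hy
    have hsub : (f ⁻¹' {f x} ∩ s).Subsingleton := fun a ha b hb ↦
      hf ha.2 hb.2 (ha.1.trans hb.1.symm)
    rw [hsub.eq_singleton_of_mem ⟨rfl, hx⟩, Set.indicator_of_mem (Set.mem_image_of_mem f hx)]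
    simp
  · have hempty : f ⁻¹' {y} ∩ s = ∅ :=
      Set.eq_empty_of_forall_notMem fun x hx ↦ hy ⟨x, hx.2, hx.1⟩
    rw [hempty, Set.indicator_of_notMem hy]
    simp

lemma toENNReal_encard_iUnion {t : ℕ → Set α} (ht : Pairwise (Function.onFun Disjoint t)) :
    ENat.toENNReal (⋃ n, t n).encard = ∑' n, ENat.toENNReal (t n).encard := by
  let : MeasurableSpace α := ⊤
  simp_rw [← Measure.count_apply (MeasurableSpace.measurableSet_top),
    measure_iUnion ht fun _ ↦ MeasurableSpace.measurableSet_top]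

lemma toENNReal_encard_preimage_inter_eq_tsum_indicator {t : ℕ → Set α}
    (ht : Pairwise (Function.onFun Disjoint t)) (hst : s ⊆ ⋃ n, t n)
    (hinj : ∀ n, Set.InjOn f (s ∩ t n)) (y : β) :
    ENat.toENNReal (f ⁻¹' {y} ∩ s).encard =
      ∑' n, (f '' (s ∩ t n)).indicator (fun _ ↦ (1 : ℝ≥0∞)) y := by
  have hfibre : f ⁻¹' {y} ∩ s = ⋃ n, f ⁻¹' {y} ∩ (s ∩ t n) := by
    rw [← Set.inter_iUnion, ← Set.inter_iUnion, Set.inter_eq_left.2 hst]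
  rw [hfibre, toENNReal_encard_iUnion fun i j hij ↦
    (ht hij).mono (fun _ hx ↦ hx.2.2) (fun _ hx ↦ hx.2.2)]
  simp_rw [toENNReal_encard_preimage_inter_eq_indicator (hinj _)]

lemma ae_preimage_inter_eq_of_measure_image_diff_eq_zero [MeasurableSpace β] {ν : Measure β}
    {t : Set α} (hst : s ⊆ t) (h : ν (f '' (t \ s)) = 0) :
    ∀ᵐ y ∂ν, f ⁻¹' {y} ∩ t = f ⁻¹' {y} ∩ s := by
  filter_upwards [measure_eq_zero_iff_ae_notMem.1 h] with y hy
  refine Set.Subset.antisymm (fun x hx ↦ ⟨hx.1, ?_⟩) (Set.inter_subset_inter_right _ hst)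
  by_contra hxs
  exact hy ⟨x, ⟨hx.2, hxs⟩, hx.1⟩

end Fibres

section Indicatrix

variable {E : Type*} [NormedAddCommGroup E] [NormedSpace ℝ E] [FiniteDimensional ℝ E]

lemma exists_forall_approximatesLinearOn_injOn (A : E →L[ℝ] E) (hA : A.det ≠ 0) :
    ∃ r : NNReal, r ≠ 0 ∧ ∀ (f : E → E) (u : Set E), ApproximatesLinearOn f A u r →
      Set.InjOn f u := by
  obtain ⟨B, rfl⟩ : ∃ B : E ≃L[ℝ] E, (B : E →L[ℝ] E) = A :=
    ⟨A.toContinuousLinearEquivOfDetNeZero hA, by ext; simp⟩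
  rcases subsingleton_or_nontrivial E with hE | hE
  · exact ⟨1, one_ne_zero, fun f u _ ↦ f.injective_of_subsingleton.injOn⟩
  · have hpos : 0 < ‖(B.symm : E →L[ℝ] E)‖₊ := B.nnnorm_symm_pos
    exact ⟨‖(B.symm : E →L[ℝ] E)‖₊⁻¹ / 2, by positivity,
      fun f u hu ↦ hu.injOn (Or.inr (NNReal.half_lt_self (by positivity)))⟩

variable [MeasurableSpace E] [BorelSpace E] {μ : Measure E} [μ.IsAddHaarMeasure]
  {f : E → E} {f' : E → E →L[ℝ] E} {s : Set E}

lemma exists_partition_injOn_of_det_ne_zero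
    (hf' : ∀ x ∈ s, HasFDerivWithinAt f (f' x) s x) (hdet : ∀ x ∈ s, (f' x).det ≠ 0) :
    ∃ t : ℕ → Set E, Pairwise (Function.onFun Disjoint t) ∧
      (∀ n, MeasurableSet (t n)) ∧ s ⊆ ⋃ n, t n ∧ ∀ n, Set.InjOn f (s ∩ t n) := by
  rcases s.eq_empty_or_nonempty with rfl | hne
  · exact ⟨fun _ ↦ ∅, by simp [Pairwise], by simp, by simp, by simp⟩
  have hr (A : E →L[ℝ] E) : ∃ r : NNReal, r ≠ 0 ∧ (A.det ≠ 0 → ∀ u : Set E,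
      ApproximatesLinearOn f A u r → Set.InjOn f u) := by
    by_cases hA : A.det = 0
    · exact ⟨1, one_ne_zero, fun h ↦ absurd hA h⟩
    · obtain ⟨r, hr0, hr⟩ := exists_forall_approximatesLinearOn_injOn A hA
      exact ⟨r, hr0, fun _ ↦ hr f⟩
  choose r hr0 hinj using hr
  obtain ⟨t, A, htd, htm, hst, happ, hA⟩ :=
    exists_partition_approximatesLinearOn_of_hasFDerivWithinAt f s f' hf' r hr0
  refine ⟨t, htd, htm, hst, fun n ↦ hinj (A n) ?_ _ (happ n)⟩
  obtain ⟨y, hy, hAy⟩ := hA hne n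
  exact hAy ▸ hdet y hy

lemma measurable_encard_preimage_inter_of_det_ne_zero (hs : MeasurableSet s)
    (hf' : ∀ x ∈ s, HasFDerivWithinAt f (f' x) s x) (hdet : ∀ x ∈ s, (f' x).det ≠ 0) :
    Measurable fun y ↦ ENat.toENNReal (f ⁻¹' {y} ∩ s).encard := by
  obtain ⟨t, htd, htm, hst, hinj⟩ := exists_partition_injOn_of_det_ne_zero hf' hdet
  simp_rw [toENNReal_encard_preimage_inter_eq_tsum_indicator htd hst hinj]
  exact Measurable.tsum fun n ↦ measurable_const.indicator <|
    measurable_image_of_fderivWithin (hs.inter (htm n))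
      (fun x hx ↦ (hf' x hx.1).mono Set.inter_subset_left) (hinj n)

lemma lintegral_abs_det_fderiv_eq_lintegral_encard_of_det_ne_zero (hs : MeasurableSet s)
    (hf' : ∀ x ∈ s, HasFDerivWithinAt f (f' x) s x) (hdet : ∀ x ∈ s, (f' x).det ≠ 0) :
    ∫⁻ x in s, ENNReal.ofReal |(f' x).det| ∂μ =
      ∫⁻ y, ENat.toENNReal (f ⁻¹' {y} ∩ s).encard ∂μ := by
  obtain ⟨t, htd, htm, hst, hinj⟩ := exists_partition_injOn_of_det_ne_zero hf' hdet
  have hstm (n : ℕ) : MeasurableSet (s ∩ t n) := hs.inter (htm n)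
  have hder (n : ℕ) : ∀ x ∈ s ∩ t n, HasFDerivWithinAt f (f' x) (s ∩ t n) x :=
    fun x hx ↦ (hf' x hx.1).mono Set.inter_subset_left
  have himg (n : ℕ) : MeasurableSet (f '' (s ∩ t n)) :=
    measurable_image_of_fderivWithin (hstm n) (hder n) (hinj n)
  calc ∫⁻ x in s, ENNReal.ofReal |(f' x).det| ∂μ
      = ∫⁻ x in ⋃ n, s ∩ t n, ENNReal.ofReal |(f' x).det| ∂μ := by
        rw [← Set.inter_iUnion, Set.inter_eq_left.2 hst]
    _ = ∑' n, ∫⁻ x in s ∩ t n, ENNReal.ofReal |(f' x).det| ∂μ :=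
        lintegral_iUnion hstm
          (fun i j hij ↦ (htd hij).mono Set.inter_subset_right Set.inter_subset_right) _
    _ = ∑' n, ∫⁻ y, (f '' (s ∩ t n)).indicator (fun _ ↦ 1) y ∂μ := by
        congr with n
        rw [lintegral_abs_det_fderiv_eq_addHaar_image μ (hstm n) (hder n) (hinj n),
          lintegral_indicator_const (himg n), one_mul]
    _ = ∫⁻ y, ENat.toENNReal (f ⁻¹' {y} ∩ s).encard ∂μ := by
        simp_rw [toENNReal_encard_preimage_inter_eq_tsum_indicator htd hst hinj]
        rw [lintegral_tsum fun n ↦ (measurable_const.indicator (himg n)).aemeasurable]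

lemma exists_measurableSet_subset_det_ne_zero (hs : MeasurableSet s)
    (hf' : ∀ x ∈ s, HasFDerivWithinAt f (f' x) s x) :
    ∃ r ⊆ s, MeasurableSet r ∧ (∀ x ∈ r, (f' x).det ≠ 0) ∧
      (∀ᵐ x ∂μ.restrict (s \ r), (f' x).det = 0) ∧ μ (f '' (s \ r)) = 0 := by
  have hnull : NullMeasurableSet {x | (f' x).det ≠ 0} (μ.restrict s) :=
    (ContinuousLinearMap.continuous_det.measurable.comp_aemeasurable
      (aemeasurable_fderivWithin μ hs hf')).nullMeasurable (measurableSet_singleton 0).compl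
  obtain ⟨r, hr, hrm, hreq⟩ := hnull.exists_measurable_subset_ae_eq
  have hN : μ (s ∩ ({x | (f' x).det ≠ 0} \ r)) = 0 := by
    rw [Set.inter_comm, ← Measure.restrict_apply' hs]
    exact ae_le_set.1 hreq.symm.le
  refine ⟨s ∩ r, Set.inter_subset_left, hs.inter hrm, fun x hx ↦ hr hx.2, ?_, ?_⟩
  · rw [ae_restrict_iff' (hs.diff (hs.inter hrm))]
    filter_upwards [measure_eq_zero_iff_ae_notMem.1 hN] with x hx hxs
    by_contra hdet
    exact hx ⟨hxs.1, hdet, fun hxr ↦ hxs.2 ⟨hxs.1, hxr⟩⟩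
  · have hcrit : μ (f '' (s ∩ {x | (f' x).det = 0})) = 0 :=
      addHaar_image_eq_zero_of_det_fderivWithin_eq_zero μ
        (fun x hx ↦ (hf' x hx.1).mono Set.inter_subset_left) fun x hx ↦ hx.2
    have hexc : μ (f '' (s ∩ ({x | (f' x).det ≠ 0} \ r))) = 0 :=
      addHaar_image_eq_zero_of_differentiableOn_of_addHaar_eq_zero μ
        (fun x hx ↦ ((hf' x hx.1).mono Set.inter_subset_left).differentiableWithinAt) hN
    refine measure_mono_null ?_ (measure_union_null hcrit hexc)
    rw [← Set.image_union]
    refine Set.image_mono fun x hx ↦ ?_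
    by_cases hdet : (f' x).det = 0
    · exact Or.inl ⟨hx.1, hdet⟩
    · exact Or.inr ⟨hx.1, hdet, fun hxr ↦ hx.2 ⟨hx.1, hxr⟩⟩

theorem aemeasurable_encard_preimage_inter (hs : MeasurableSet s)
    (hf' : ∀ x ∈ s, HasFDerivWithinAt f (f' x) s x) :
    AEMeasurable (fun y ↦ ENat.toENNReal (f ⁻¹' {y} ∩ s).encard) μ := by
  obtain ⟨r, hrs, hrm, hrdet, -, himg⟩ := exists_measurableSet_subset_det_ne_zero (μ := μ) hs hf'
  refine (measurable_encard_preimage_inter_of_det_ne_zero hrm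
    (fun x hx ↦ (hf' x (hrs hx)).mono hrs) hrdet).aemeasurable.congr ?_
  filter_upwards [ae_preimage_inter_eq_of_measure_image_diff_eq_zero hrs himg] with y hy
  rw [hy]

theorem lintegral_abs_det_fderiv_eq_lintegral_encard (hs : MeasurableSet s)
    (hf' : ∀ x ∈ s, HasFDerivWithinAt f (f' x) s x) :
    ∫⁻ x in s, ENNReal.ofReal |(f' x).det| ∂μ =
      ∫⁻ y, ENat.toENNReal (f ⁻¹' {y} ∩ s).encard ∂μ := by
  obtain ⟨r, hrs, hrm, hrdet, hcrit, himg⟩ :=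
    exists_measurableSet_subset_det_ne_zero (μ := μ) hs hf'
  have hzero : ∫⁻ x in s \ r, ENNReal.ofReal |(f' x).det| ∂μ = 0 :=
    (lintegral_congr_ae (hcrit.mono fun x hx ↦ by simp [hx])).trans lintegral_zero
  rw [← lintegral_inter_add_sdiff _ s hrm, hzero, add_zero, Set.inter_eq_right.2 hrs,
    lintegral_abs_det_fderiv_eq_lintegral_encard_of_det_ne_zero hrm
      (fun x hx ↦ (hf' x (hrs hx)).mono hrs) hrdet]
  refine lintegral_congr_ae ?_
  filter_upwards [ae_preimage_inter_eq_of_measure_image_diff_eq_zero hrs himg] with y hy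
  rw [hy]

theorem ae_finite_preimage_inter (hs : MeasurableSet s)
    (hf' : ∀ x ∈ s, HasFDerivWithinAt f (f' x) s x)
    (hfin : ∫⁻ x in s, ENNReal.ofReal |(f' x).det| ∂μ ≠ ∞) :
    ∀ᵐ y ∂μ, (f ⁻¹' {y} ∩ s).Finite := by
  rw [lintegral_abs_det_fderiv_eq_lintegral_encard hs hf'] at hfin
  filter_upwards [ae_lt_top' (aemeasurable_encard_preimage_inter hs hf') hfin] with y hy
  exact Set.encard_lt_top_iff.1 (ENat.toENNReal_lt_top.1 hy)

theorem area_formula_of_differentiableAt_of_negligible_diff {t : Set E} (hs : MeasurableSet s)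
    (hst : s ⊆ t) (hnull : μ (t \ s) = 0) (himage : μ (f '' (t \ s)) = 0)
    (hf : ∀ x ∈ s, DifferentiableAt ℝ f x)
    (hfin : ∫⁻ x in s, ENNReal.ofReal |(fderiv ℝ f x).det| ∂μ ≠ ∞) :
    (∀ᵐ x ∂μ.restrict t, DifferentiableAt ℝ f x) ∧
      IntegrableOn (fun x ↦ |(fderiv ℝ f x).det|) t μ ∧
      ∫⁻ x in t, ENNReal.ofReal |(fderiv ℝ f x).det| ∂μ =
        ∫⁻ y, ENat.toENNReal (f ⁻¹' {y} ∩ t).encard ∂μ ∧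
      ∀ᵐ y ∂μ, (f ⁻¹' {y} ∩ t).Finite := by
  have hae : t =ᵐ[μ] s := (ae_le_set.2 hnull).antisymm hst.eventuallyLE
  have hfibre := ae_preimage_inter_eq_of_measure_image_diff_eq_zero hst himage
  have hf' : ∀ x ∈ s, HasFDerivWithinAt f (fderiv ℝ f x) s x :=
    fun x hx ↦ (hf x hx).hasFDerivAt.hasFDerivWithinAt
  rw [Measure.restrict_congr_set hae, IntegrableOn, Measure.restrict_congr_set hae]
  refine ⟨ae_restrict_of_forall_mem hs hf, ⟨?_, ?_⟩, ?_, ?_⟩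
  · exact (ContinuousLinearMap.continuous_det.measurable.comp
      (measurable_fderiv ℝ f)).abs.aestronglyMeasurable
  · simpa [hasFiniteIntegral_iff_norm] using hfin.lt_top
  · rw [lintegral_abs_det_fderiv_eq_lintegral_encard hs hf']
    exact lintegral_congr_ae (hfibre.mono fun y hy ↦ by simp only [hy])
  · filter_upwards [hfibre, ae_finite_preimage_inter hs hf' hfin] with y hy hfinite
    rwa [hy]

end Indicatrix

section RankOnePerturbation

variable {E : Type*} [NormedAddCommGroup E] [NormedSpace ℝ E] [FiniteDimensional ℝ E]

lemma exists_forall_norm_le_abs_det_le (E : Type*) [NormedAddCommGroup E] [NormedSpace ℝ E]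
    [FiniteDimensional ℝ E] (K : ℝ) :
    ∃ C : ℝ, ∀ A : E →L[ℝ] E, ‖A‖ ≤ K → |A.det| ≤ C := by
  have : ProperSpace (E →L[ℝ] E) := FiniteDimensional.proper ℝ _
  obtain ⟨C, hC⟩ := (isCompact_closedBall (0 : E →L[ℝ] E) K).exists_bound_of_continuousOn
    (f := fun A ↦ A.det) ContinuousLinearMap.continuous_det.continuousOn
  exact ⟨C, fun A hA ↦ hC A (by simpa using hA)⟩

-- `Q` is obtained from `B + q ⊗ w` by rescaling the direction of `w` by the factor `c`.
lemma exists_det_eq_mul_det_add_smulRight (B : E →L[ℝ] E) (q : E →L[ℝ] ℝ) {w : E} (hw : w ≠ 0)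
    {c : ℝ} (hc0 : 0 ≤ c) (hc1 : c ≤ 1) :
    ∃ Q : E →L[ℝ] E, Q.det = c * (B + q.smulRight w).det ∧
      ‖Q‖ ≤ 2 * ‖B‖ + c * ‖q‖ * ‖w‖ := by
  obtain ⟨g, hg, hgw⟩ := exists_dual_vector ℝ w (norm_ne_zero_iff.2 hw)
  have hw0 : 0 < ‖w‖ := norm_pos_iff.2 hw
  let ρ : E →L[ℝ] ℝ := ‖w‖⁻¹ • g
  have hρw : ρ w = 1 := by simp [ρ, hgw, hw0.ne']
  have hρ : ‖ρ‖ * ‖w‖ = 1 := by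
    rw [norm_smul, norm_inv, norm_norm, hg, mul_one, inv_mul_cancel₀ hw0.ne']
  let P : E →L[ℝ] E := ContinuousLinearMap.id ℝ E + ((c - 1) • ρ).smulRight w
  have hPdet : LinearMap.det (P : E →ₗ[ℝ] E) = c := by
    have hP : (P : E →ₗ[ℝ] E) = LinearMap.transvection ((c - 1) • (ρ : E →ₗ[ℝ] ℝ)) w := by
      ext v; simp [P, LinearMap.transvection.apply]
    rw [hP, LinearMap.transvection.det]
    simp [hρw]
  refine ⟨P ∘L (B + q.smulRight w), ?_, ?_⟩
  · rw [← hPdet]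
    exact LinearMap.det_comp _ _
  · have hQ : P ∘L (B + q.smulRight w) =
        B + (((c - 1) • ρ) ∘L B).smulRight w + (c • q).smulRight w := by
      ext v
      simp only [P, ContinuousLinearMap.comp_apply, add_apply, ContinuousLinearMap.id_apply,
        ContinuousLinearMap.smulRight_apply, smul_apply, smul_eq_mul, map_add, map_smul, hρw]
      module
    have hρB : ‖(((c - 1) • ρ) ∘L B).smulRight w‖ ≤ ‖B‖ := by
      calc ‖(((c - 1) • ρ) ∘L B).smulRight w‖
          ≤ ‖(c - 1) • ρ‖ * ‖B‖ * ‖w‖ := by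
            rw [ContinuousLinearMap.norm_smulRight_apply]
            gcongr
            exact ContinuousLinearMap.opNorm_comp_le _ _
        _ = |c - 1| * ‖B‖ := by
            rw [norm_smul, Real.norm_eq_abs]
            linear_combination |c - 1| * ‖B‖ * hρ
        _ ≤ ‖B‖ := mul_le_of_le_one_left (norm_nonneg B) (abs_le.2 ⟨by linarith, by linarith⟩)
    have hq : ‖(c • q).smulRight w‖ = c * ‖q‖ * ‖w‖ := by
      rw [ContinuousLinearMap.norm_smulRight_apply, norm_smul, Real.norm_of_nonneg hc0]
    calc ‖P ∘L (B + q.smulRight w)‖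
        ≤ ‖B‖ + ‖(((c - 1) • ρ) ∘L B).smulRight w‖ + ‖(c • q).smulRight w‖ :=
          hQ ▸ norm_add₃_le
      _ ≤ ‖B‖ + ‖B‖ + c * ‖q‖ * ‖w‖ := by
          rw [hq]
          gcongr
      _ = 2 * ‖B‖ + c * ‖q‖ * ‖w‖ := by ring

lemma exists_forall_abs_det_add_smulRight_le (E : Type*) [NormedAddCommGroup E] [NormedSpace ℝ E]
    [FiniteDimensional ℝ E] (K : ℝ) :
    ∃ C : ℝ, ∀ (B : E →L[ℝ] E) (q : E →L[ℝ] ℝ) (w : E) (c : ℝ), 0 < c → c ≤ 1 → ‖B‖ ≤ K →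
      c * ‖q‖ * ‖w‖ ≤ K → |(B + q.smulRight w).det| ≤ C / c := by
  obtain ⟨C, hC⟩ := exists_forall_norm_le_abs_det_le E (3 * K)
  refine ⟨C, fun B q w c hc0 hc1 hB hq ↦ ?_⟩
  rw [le_div_iff₀' hc0]
  by_cases hw : w = 0
  · have hB' : ‖B‖ ≤ 3 * K := by linarith [norm_nonneg B]
    calc c * |(B + q.smulRight w).det| = c * |B.det| := by simp [hw]
      _ ≤ |B.det| := mul_le_of_le_one_left (abs_nonneg _) hc1
      _ ≤ C := hC B hB'
  · obtain ⟨Q, hQdet, hQ⟩ := exists_det_eq_mul_det_add_smulRight B q hw hc0.le hc1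
    calc c * |(B + q.smulRight w).det| = |Q.det| := by rw [hQdet, abs_mul, abs_of_pos hc0]
      _ ≤ C := hC Q (by linarith)

end RankOnePerturbation

section BoundedDerivative

variable {E : Type*} [NormedAddCommGroup E] [NormedSpace ℝ E]

lemma exists_forall_norm_le_of_norm_deriv_le {f : ℝ → E} {M : ℝ} {I : Set ℝ} (hI : Convex ℝ I)
    (hb : Bornology.IsBounded I) (S : Finset ℝ)
    (hf : ∀ t ∈ I \ S, DifferentiableAt ℝ f t ∧ ‖deriv f t‖ ≤ M) :
    ∃ C : ℝ, ∀ t ∈ I \ S, ‖f t‖ ≤ C := by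
  classical
  induction S using Finset.induction_on generalizing I with
  | empty =>
    simp only [Finset.coe_empty, Set.sdiff_empty] at hf ⊢
    rcases I.eq_empty_or_nonempty with rfl | ⟨t₀, ht₀⟩
    · exact ⟨0, by simp⟩
    obtain ⟨D, hD⟩ := Metric.isBounded_iff.1 hb
    refine ⟨‖f t₀‖ + M * D, fun t ht ↦ ?_⟩
    have hM : 0 ≤ M := (norm_nonneg _).trans (hf t₀ ht₀).2
    calc ‖f t‖ ≤ ‖f t₀‖ + ‖f t - f t₀‖ := norm_le_norm_add_norm_sub' _ _
      _ ≤ ‖f t₀‖ + M * ‖t - t₀‖ := by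
        gcongr
        exact hI.norm_image_sub_le_of_norm_deriv_le (fun u hu ↦ (hf u hu).1)
          (fun u hu ↦ (hf u hu).2) ht₀ ht
      _ ≤ ‖f t₀‖ + M * D := by
        gcongr
        exact hD ht ht₀
  | insert a S _ ih =>
    have hside (J : Set ℝ) (hJ : Convex ℝ J) (ha : a ∉ J) :
        ∃ C : ℝ, ∀ t ∈ (I ∩ J) \ S, ‖f t‖ ≤ C := by
      refine ih (hI.inter hJ) (hb.subset Set.inter_subset_left) fun t ht ↦ hf t ⟨ht.1.1, ?_⟩
      rw [Finset.coe_insert, Set.mem_insert_iff, not_or]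
      exact ⟨fun h ↦ ha (h ▸ ht.1.2), ht.2⟩
    obtain ⟨C₁, hC₁⟩ := hside (Set.Iio a) (convex_Iio a) Set.self_notMem_Iio
    obtain ⟨C₂, hC₂⟩ := hside (Set.Ioi a) (convex_Ioi a) Set.self_notMem_Ioi
    refine ⟨max C₁ C₂, fun t ht ↦ ?_⟩
    rw [Finset.coe_insert, Set.mem_sdiff, Set.mem_insert_iff, not_or] at ht
    obtain ⟨htI, hta, htS⟩ := ht
    rcases lt_or_gt_of_ne hta with hlt | hgt
    · exact (hC₁ t ⟨⟨htI, hlt⟩, htS⟩).trans (le_max_left _ _)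
    · exact (hC₂ t ⟨⟨htI, hgt⟩, htS⟩).trans (le_max_right _ _)

/-- `f` is differentiable at `t`, and neither its value nor its derivative there exceeds `M` in
norm: the form in which the regularity of the data of `Tmap` enters the Jacobian estimate. -/
def HasBoundedDerivAt (f : ℝ → E) (M t : ℝ) : Prop :=
  DifferentiableAt ℝ f t ∧ ‖f t‖ ≤ M ∧ ‖deriv f t‖ ≤ M

lemma HasBoundedDerivAt.mono {f : ℝ → E} {M M' t : ℝ} (h : HasBoundedDerivAt f M t)
    (hM : M ≤ M') : HasBoundedDerivAt f M' t :=
  ⟨h.1, h.2.1.trans hM, h.2.2.trans hM⟩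

lemma exists_forall_hasBoundedDerivAt {f : ℝ → E} {M : ℝ} {I : Set ℝ} (hI : Convex ℝ I)
    (hb : Bornology.IsBounded I) (S : Finset ℝ)
    (hf : ∀ t ∈ I \ S, DifferentiableAt ℝ f t ∧ ‖deriv f t‖ ≤ M) :
    ∃ C : ℝ, ∀ t ∈ I \ S, HasBoundedDerivAt f C t := by
  obtain ⟨C, hC⟩ := exists_forall_norm_le_of_norm_deriv_le hI hb S hf
  exact ⟨max C M, fun t ht ↦ ⟨(hf t ht).1, (hC t ht).trans (le_max_left _ _),
    (hf t ht).2.trans (le_max_right _ _)⟩⟩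

end BoundedDerivative

section CapKernel

variable {E : Type*} [NormedAddCommGroup E] [NormedSpace ℝ E] [FiniteDimensional ℝ E]
  [MeasurableSpace E] [BorelSpace E] (μ : Measure E) [μ.IsAddHaarMeasure]

lemma integrableOn_one_div_sqrt_one_sub_sq :
    IntegrableOn (fun r : ℝ ↦ 1 / √(1 - r ^ 2)) (Set.Ioo 0 1) := by
  have hrpow : IntegrableOn (fun r : ℝ ↦ (1 - r) ^ (-(1 / 2) : ℝ)) (Set.Ioo 0 1) := by
    have h := ((intervalIntegral.intervalIntegrable_rpow' (a := 0) (b := 1)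
      (r := (-(1 / 2) : ℝ)) (by norm_num)).comp_sub_left 1).symm
    simp only [sub_zero, sub_self] at h
    rwa [intervalIntegrable_iff_integrableOn_Ioo_of_le zero_le_one] at h
  refine Integrable.mono' hrpow (Measurable.aestronglyMeasurable (by fun_prop)) ?_
  filter_upwards [ae_restrict_mem measurableSet_Ioo] with r ⟨hr0, hr1⟩
  have h0 : 0 < 1 - r := sub_pos.2 hr1
  rw [Real.norm_of_nonneg (by positivity), Real.rpow_neg h0.le, ← Real.sqrt_eq_rpow, ← one_div]
  gcongr
  exact pow_le_of_le_one hr0.le hr1.le two_ne_zero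

lemma integrable_one_div_sqrt_one_sub_norm_sq :
    Integrable (fun x : E ↦ 1 / √(1 - ‖x‖ ^ 2)) μ := by
  rcases subsingleton_or_nontrivial E with hE | hE
  · exact .of_finite
  have hball : IntegrableOn (fun x : E ↦ 1 / √(1 - ‖x‖ ^ 2)) (Metric.ball 0 1) μ := by
    rw [integrableOn_fun_norm_addHaar μ (f := fun r : ℝ ↦ 1 / √(1 - r ^ 2))]
    refine Integrable.mono integrableOn_one_div_sqrt_one_sub_sq
      (Measurable.aestronglyMeasurable (by fun_prop)) ?_
    filter_upwards [ae_restrict_mem measurableSet_Ioo] with r ⟨hr0, hr1⟩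
    rw [norm_smul, norm_pow, Real.norm_of_nonneg hr0.le]
    exact mul_le_of_le_one_left (norm_nonneg _) (pow_le_one₀ hr0.le hr1.le)
  refine (integrableOn_iff_integrable_of_support_subset fun x hx ↦ ?_).1 hball
  rw [mem_ball_zero_iff]
  by_contra! h
  exact hx (by simp [Real.sqrt_eq_zero_of_nonpos (show 1 - ‖x‖ ^ 2 ≤ 0 by nlinarith)])

lemma lintegral_div_sqrt_sq_sub_norm_sq_le {k M : ℝ} (hkM : k ≤ M) :
    ∫⁻ x : E, ENNReal.ofReal (k / √(k ^ 2 - ‖x‖ ^ 2)) ∂μ ≤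
      ENNReal.ofReal (M ^ Module.finrank ℝ E * ∫ x : E, 1 / √(1 - ‖x‖ ^ 2) ∂μ) := by
  rcases le_or_gt k 0 with hk | hk
  · have hzero (x : E) : ENNReal.ofReal (k / √(k ^ 2 - ‖x‖ ^ 2)) = 0 :=
      ENNReal.ofReal_of_nonpos (div_nonpos_of_nonpos_of_nonneg hk (Real.sqrt_nonneg _))
    simp [hzero]
  have hscale (x : E) : k / √(k ^ 2 - ‖x‖ ^ 2) = 1 / √(1 - ‖k⁻¹ • x‖ ^ 2) := by
    have h : k ^ 2 - ‖x‖ ^ 2 = k ^ 2 * (1 - ‖k⁻¹ • x‖ ^ 2) := by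
      rw [norm_smul, norm_inv, Real.norm_of_nonneg hk.le]
      field_simp
    rw [h, Real.sqrt_mul (by positivity), Real.sqrt_sq hk.le, div_mul_eq_div_div, div_self hk.ne']
  have hint : Integrable (fun x : E ↦ 1 / √(1 - ‖k⁻¹ • x‖ ^ 2)) μ :=
    (integrable_one_div_sqrt_one_sub_norm_sq μ).comp_smul (inv_ne_zero hk.ne')
  simp_rw [hscale]
  rw [← ofReal_integral_eq_lintegral_ofReal hint (.of_forall fun x ↦ by positivity),
    Measure.integral_comp_inv_smul μ (fun x : E ↦ 1 / √(1 - ‖x‖ ^ 2)), smul_eq_mul,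
    abs_of_nonneg (by positivity)]
  gcongr

end CapKernel

section Coordinates

variable {n : ℕ}

lemma norm_sq_eq_norm_xpart_sq_add_tlast_sq (z : EuclideanSpace ℝ (Fin (n + 1))) :
    ‖z‖ ^ 2 = ‖xpart z‖ ^ 2 + tlast z ^ 2 := by
  simp [EuclideanSpace.norm_sq_eq, Fin.sum_univ_castSucc, xpart, tlast, EuclideanSpace.equiv]

lemma xpart_hvec (x : EuclideanSpace ℝ (Fin n)) (c : ℝ) : xpart (hvec x c) = x := by
  ext i
  simp [xpart, hvec, EuclideanSpace.equiv]

lemma tlast_hvec (x : EuclideanSpace ℝ (Fin n)) (c : ℝ) : tlast (hvec x c) = c := by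
  simp [tlast, hvec, EuclideanSpace.equiv]

lemma norm_hvec (x : EuclideanSpace ℝ (Fin n)) (c : ℝ) :
    ‖hvec x c‖ = √(‖x‖ ^ 2 + c ^ 2) := by
  rw [← Real.sqrt_sq (norm_nonneg (hvec x c)), norm_sq_eq_norm_xpart_sq_add_tlast_sq, xpart_hvec,
    tlast_hvec]

lemma norm_hvec_sqrt_sq_sub {x : EuclideanSpace ℝ (Fin n)} {k : ℝ} (hx : ‖x‖ ≤ k) :
    ‖hvec x √(k ^ 2 - ‖x‖ ^ 2)‖ = k := by
  rw [norm_hvec, Real.sq_sqrt (sub_nonneg.2 (by gcongr)), add_sub_cancel,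
    Real.sqrt_sq ((norm_nonneg x).trans hx)]

lemma hvec_xpart (z : EuclideanSpace ℝ (Fin (n + 1))) (c : ℝ) :
    hvec (xpart z) c = z + (c - tlast z) • EuclideanSpace.single (Fin.last n) 1 := by
  ext i
  induction i using Fin.lastCases with
  | last => simp [tlast, hvec, EuclideanSpace.equiv]
  | cast i => simp [xpart, hvec, EuclideanSpace.equiv, (Fin.castSucc_lt_last i).ne]

lemma measurePreserving_xpart_tlast :
    MeasurePreserving (fun z : EuclideanSpace ℝ (Fin (n + 1)) ↦ (xpart z, tlast z)) volume
      (volume.prod volume) := by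
  have hsplit := (Measure.measurePreserving_swap.comp (volume_preserving_piFinSuccAbove
    (fun _ : Fin (n + 1) ↦ ℝ) (Fin.last n))).comp (PiLp.volume_preserving_ofLp (Fin (n + 1)))
  have h : MeasurePreserving (fun z : EuclideanSpace ℝ (Fin (n + 1)) ↦
      (WithLp.toLp 2 ((Fin.last n).removeNth z.ofLp), tlast z)) volume (volume.prod volume) :=
    ((PiLp.volume_preserving_toLp (Fin n)).prod (MeasurePreserving.id volume)).comp hsplit
  simp_rw [Fin.removeNth_last] at h
  exact h

lemma measurable_xpart : Measurable (xpart (n := n)) :=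
  measurePreserving_xpart_tlast.measurable.fst

lemma measurable_tlast : Measurable (tlast (n := n)) :=
  measurePreserving_xpart_tlast.measurable.snd

lemma lintegral_xpart_tlast {g : EuclideanSpace ℝ (Fin n) → ℝ → ℝ≥0∞}
    (hg : Measurable (Function.uncurry g)) :
    ∫⁻ z, g (xpart z) (tlast z) = ∫⁻ t, ∫⁻ x, g x t :=
  (measurePreserving_xpart_tlast.lintegral_comp hg).trans
    (lintegral_prod_symm _ hg.aemeasurable)

lemma volume_preimage_tlast_of_countable {S : Set ℝ} (hS : S.Countable) :
    volume (tlast (n := n) ⁻¹' S) = 0 := by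
  have h := measurePreserving_xpart_tlast (n := n) |>.measure_preimage
    (s := Set.univ ×ˢ S) (MeasurableSet.univ.prod hS.measurableSet).nullMeasurableSet
  rw [Measure.prod_prod, hS.measure_zero volume, mul_zero] at h
  simpa [Set.preimage] using h

end Coordinates

section Derivative

variable {n : ℕ}

/-- The last coordinate `tlast` as a continuous linear functional. -/
def tlastCLM (n : ℕ) : EuclideanSpace ℝ (Fin (n + 1)) →L[ℝ] ℝ :=
  EuclideanSpace.proj (Fin.last n)

/-- The derivative at `z` of the height `z ↦ √(k0(t)² - |x|²)`, where `z = (x, t)`. -/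
def heightDeriv (k0 : ℝ → ℝ) (z : EuclideanSpace ℝ (Fin (n + 1))) :
    EuclideanSpace ℝ (Fin (n + 1)) →L[ℝ] ℝ :=
  (√(k0 (tlast z) ^ 2 - ‖xpart z‖ ^ 2))⁻¹ •
    ((k0 (tlast z) * deriv k0 (tlast z)) • tlastCLM n -
      innerSL ℝ (hvec (xpart z) 0))

/-- The derivative of `Tmap k0 s R` at `z` without the contribution of the derivative of the
height, the only one that is unbounded near the rim `|x| = k0(t)`. -/
def regularDeriv (k0 : ℝ → ℝ) (s : ℝ → EuclideanSpace ℝ (Fin (n + 1)))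
    (R : ℝ → EuclideanSpace ℝ (Fin (n + 1)) →L[ℝ] EuclideanSpace ℝ (Fin (n + 1)))
    (z : EuclideanSpace ℝ (Fin (n + 1))) :
    EuclideanSpace ℝ (Fin (n + 1)) →L[ℝ] EuclideanSpace ℝ (Fin (n + 1)) :=
  R (tlast z) ∘L (ContinuousLinearMap.id ℝ _ -
      (tlastCLM n).smulRight
        (EuclideanSpace.single (Fin.last n) 1 + k0 (tlast z) • deriv s (tlast z) +
          deriv k0 (tlast z) • s (tlast z))) +
    (tlastCLM n).smulRight
      (deriv R (tlast z) (hvec (xpart z) √(k0 (tlast z) ^ 2 - ‖xpart z‖ ^ 2) -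
        k0 (tlast z) • s (tlast z)))

variable {k0 : ℝ → ℝ} {s : ℝ → EuclideanSpace ℝ (Fin (n + 1))}
  {R : ℝ → EuclideanSpace ℝ (Fin (n + 1)) →L[ℝ] EuclideanSpace ℝ (Fin (n + 1))}
  {z : EuclideanSpace ℝ (Fin (n + 1))}

lemma hasFDerivAt_tlast (z : EuclideanSpace ℝ (Fin (n + 1))) :
    HasFDerivAt tlast (tlastCLM n) z :=
  (tlastCLM n).hasFDerivAt

lemma tlastCLM_apply (z : EuclideanSpace ℝ (Fin (n + 1))) : tlastCLM n z = tlast z := rfl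

lemma hasFDerivAt_height (hk : DifferentiableAt ℝ k0 (tlast z)) (hz : ‖xpart z‖ < k0 (tlast z)) :
    HasFDerivAt (fun z ↦ √(k0 (tlast z) ^ 2 - ‖xpart z‖ ^ 2)) (heightDeriv k0 z) z := by
  have hpos : 0 < k0 (tlast z) ^ 2 - ‖xpart z‖ ^ 2 := sub_pos.2 (by gcongr)
  have hxpart (y : EuclideanSpace ℝ (Fin (n + 1))) : ‖xpart y‖ ^ 2 = ‖y‖ ^ 2 - tlast y ^ 2 := by
    rw [norm_sq_eq_norm_xpart_sq_add_tlast_sq, add_sub_cancel_right]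
  have hinner : innerSL ℝ (hvec (xpart z) 0) = innerSL ℝ z - tlast z • tlastCLM n := by
    ext v
    simp [hvec_xpart, tlastCLM_apply, tlast, EuclideanSpace.inner_single_left, sub_eq_add_neg]
  have hk' := hk.hasDerivAt.comp_hasFDerivAt z (hasFDerivAt_tlast z)
  have hsq := (hk'.pow 2).sub ((hasStrictFDerivAt_norm_sq z).hasFDerivAt.sub
      ((hasFDerivAt_tlast z).pow 2))
  simp_rw [hxpart] at hpos ⊢
  refine (hsq.sqrt hpos.ne').congr_fderiv ?_
  rw [heightDeriv, hinner, hxpart]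
  simp only [Function.comp_apply]
  module

lemma hasFDerivAt_Tmap (hk : DifferentiableAt ℝ k0 (tlast z))
    (hs : DifferentiableAt ℝ s (tlast z)) (hR : DifferentiableAt ℝ R (tlast z))
    (hz : ‖xpart z‖ < k0 (tlast z)) :
    HasFDerivAt (Tmap k0 s R) (regularDeriv k0 s R z +
      (heightDeriv k0 z).smulRight (R (tlast z) (EuclideanSpace.single (Fin.last n) 1))) z := by
  have hτ := hasFDerivAt_tlast z
  have hv := ((hasFDerivAt_id z).add (((hasFDerivAt_height hk hz).sub hτ).smul_const
    (EuclideanSpace.single (Fin.last n) (1 : ℝ)))).sub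
    ((hk.hasDerivAt.comp_hasFDerivAt z hτ).smul (hs.hasDerivAt.hasFDerivAt.comp z hτ))
  have hT := (hR.hasDerivAt.hasFDerivAt.comp z hτ).clm_apply hv
  have hTmap : Tmap k0 s R = fun y ↦ R (tlast y) (y + (√(k0 (tlast y) ^ 2 - ‖xpart y‖ ^ 2) -
      tlast y) • EuclideanSpace.single (Fin.last n) (1 : ℝ) - k0 (tlast y) • s (tlast y)) := by
    funext y
    rw [← hvec_xpart, Tmap]
  rw [hTmap]
  refine hT.congr_fderiv ?_
  refine ContinuousLinearMap.ext fun v ↦ ?_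
  simp only [regularDeriv, hvec_xpart, tlastCLM_apply, Function.comp_apply, id_eq, Pi.sub_apply,
    Pi.add_apply, Pi.smul_apply', ContinuousLinearMap.comp_apply, ContinuousLinearMap.id_apply,
    ContinuousLinearMap.smulRight_apply, ContinuousLinearMap.toSpanSingleton_apply,
    ContinuousLinearMap.flip_apply, add_apply, sub_apply, smul_apply, smul_eq_mul, map_add,
    map_sub, map_smul]
  module

end Derivative

section JacobianBound

variable {n : ℕ} {k0 : ℝ → ℝ} {s : ℝ → EuclideanSpace ℝ (Fin (n + 1))}
  {R : ℝ → EuclideanSpace ℝ (Fin (n + 1)) →L[ℝ] EuclideanSpace ℝ (Fin (n + 1))}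
  {z : EuclideanSpace ℝ (Fin (n + 1))}

lemma norm_tlastCLM_le_one : ‖tlastCLM n‖ ≤ 1 :=
  (tlastCLM n).opNorm_le_bound zero_le_one fun z ↦
    (PiLp.norm_apply_le z (Fin.last n)).trans_eq (one_mul _).symm

lemma sqrt_div_mul_norm_heightDeriv_le (hz : ‖xpart z‖ < k0 (tlast z)) :
    √(k0 (tlast z) ^ 2 - ‖xpart z‖ ^ 2) / k0 (tlast z) * ‖heightDeriv k0 z‖ ≤
      ‖deriv k0 (tlast z)‖ + 1 := by
  have hk : 0 < k0 (tlast z) := (norm_nonneg _).trans_lt hz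
  have hκ : 0 < √(k0 (tlast z) ^ 2 - ‖xpart z‖ ^ 2) := Real.sqrt_pos.2 (sub_pos.2 (by gcongr))
  have hnum : ‖(k0 (tlast z) * deriv k0 (tlast z)) • tlastCLM n - innerSL ℝ (hvec (xpart z) 0)‖ ≤
      k0 (tlast z) * ‖deriv k0 (tlast z)‖ * 1 + k0 (tlast z) := by
    refine (norm_sub_le _ _).trans (add_le_add ?_ ?_)
    · rw [norm_smul, norm_mul, Real.norm_of_nonneg hk.le]
      gcongr
      exact norm_tlastCLM_le_one
    · rw [innerSL_apply_norm, norm_hvec, sq (0 : ℝ), mul_zero, add_zero,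
        Real.sqrt_sq (norm_nonneg _)]
      exact hz.le
  rw [heightDeriv, norm_smul, norm_inv, Real.norm_of_nonneg hκ.le]
  calc _ = (k0 (tlast z))⁻¹ * ‖(k0 (tlast z) * deriv k0 (tlast z)) • tlastCLM n -
        innerSL ℝ (hvec (xpart z) 0)‖ := by field_simp
    _ ≤ (k0 (tlast z))⁻¹ * (k0 (tlast z) * ‖deriv k0 (tlast z)‖ * 1 + k0 (tlast z)) := by gcongr
    _ = ‖deriv k0 (tlast z)‖ + 1 := by field_simp

lemma norm_regularDeriv_le {M : ℝ} (hk : HasBoundedDerivAt k0 M (tlast z))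
    (hs : HasBoundedDerivAt s M (tlast z)) (hR : HasBoundedDerivAt R M (tlast z))
    (hz : ‖xpart z‖ ≤ k0 (tlast z)) :
    ‖regularDeriv k0 s R z‖ ≤ 3 * M ^ 3 + M ^ 2 + 2 * M := by
  obtain ⟨-, hk, hk'⟩ := hk
  obtain ⟨-, hs, hs'⟩ := hs
  obtain ⟨-, hR, hR'⟩ := hR
  have hM : 0 ≤ M := (norm_nonneg _).trans hk
  have hshift : ‖EuclideanSpace.single (Fin.last n) (1 : ℝ) + k0 (tlast z) • deriv s (tlast z) +
      deriv k0 (tlast z) • s (tlast z)‖ ≤ 1 + M * M + M * M := by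
    refine norm_add₃_le.trans ?_
    rw [PiLp.norm_single, norm_one, norm_smul, norm_smul]
    gcongr
  have hpoint : ‖hvec (xpart z) √(k0 (tlast z) ^ 2 - ‖xpart z‖ ^ 2) -
      k0 (tlast z) • s (tlast z)‖ ≤ M + M * M := by
    refine (norm_sub_le _ _).trans ?_
    rw [norm_hvec_sqrt_sq_sub hz, norm_smul]
    gcongr
    exact (Real.le_norm_self _).trans hk
  suffices h : ‖regularDeriv k0 s R z‖ ≤
      M * (1 + 1 * (1 + M * M + M * M)) + 1 * (M * (M + M * M)) from h.trans_eq (by ring)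
  refine (norm_add_le _ _).trans (add_le_add ?_ ?_)
  · refine (ContinuousLinearMap.opNorm_comp_le _ _).trans ?_
    gcongr
    refine (norm_sub_le _ _).trans (add_le_add ContinuousLinearMap.norm_id_le ?_)
    rw [ContinuousLinearMap.norm_smulRight_apply]
    gcongr
    exact norm_tlastCLM_le_one
  · rw [ContinuousLinearMap.norm_smulRight_apply]
    gcongr
    · exact norm_tlastCLM_le_one
    · exact (ContinuousLinearMap.le_opNorm _ _).trans (by gcongr)

lemma exists_forall_abs_det_fderiv_Tmap_le (n : ℕ) (M : ℝ) :
    ∃ C : ℝ, ∀ {k0 : ℝ → ℝ} {s : ℝ → EuclideanSpace ℝ (Fin (n + 1))}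
      {R : ℝ → EuclideanSpace ℝ (Fin (n + 1)) →L[ℝ] EuclideanSpace ℝ (Fin (n + 1))}
      {z : EuclideanSpace ℝ (Fin (n + 1))}, HasBoundedDerivAt k0 M (tlast z) →
      HasBoundedDerivAt s M (tlast z) → HasBoundedDerivAt R M (tlast z) →
      ‖xpart z‖ < k0 (tlast z) →
      |(fderiv ℝ (Tmap k0 s R) z).det| ≤
        C * (k0 (tlast z) / √(k0 (tlast z) ^ 2 - ‖xpart z‖ ^ 2)) := by
  obtain ⟨C, hC⟩ := exists_forall_abs_det_add_smulRight_le (EuclideanSpace ℝ (Fin (n + 1)))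
    (max (3 * M ^ 3 + M ^ 2 + 2 * M) ((M + 1) * M))
  refine ⟨C, fun {k0 s R z} hk hs hR hz ↦ ?_⟩
  have hk0 : 0 < k0 (tlast z) := (norm_nonneg _).trans_lt hz
  have hκ : 0 < √(k0 (tlast z) ^ 2 - ‖xpart z‖ ^ 2) := Real.sqrt_pos.2 (sub_pos.2 (by gcongr))
  have hM : 0 ≤ M := (norm_nonneg _).trans hk.2.1
  have hRe : ‖R (tlast z) (EuclideanSpace.single (Fin.last n) 1)‖ ≤ M := by
    refine (ContinuousLinearMap.le_opNorm _ _).trans ?_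
    rw [PiLp.norm_single, norm_one, mul_one]
    exact hR.2.1
  rw [(hasFDerivAt_Tmap hk.1 hs.1 hR.1 hz).fderiv, ← mul_div_assoc, ← div_div_eq_mul_div]
  refine hC _ _ _ _ (div_pos hκ hk0) ((div_le_one hk0).2 ?_)
    ((norm_regularDeriv_le hk hs hR hz.le).trans (le_max_left _ _)) (le_max_of_le_right ?_)
  · exact Real.sqrt_le_iff.2 ⟨hk0.le, sub_le_self _ (sq_nonneg _)⟩
  · gcongr
    exact (sqrt_div_mul_norm_heightDeriv_le hz).trans (by gcongr; exact hk.2.2)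

end JacobianBound

section Integrability

variable {n : ℕ} {L : ℝ} {k0 : ℝ → ℝ} {O S : Set ℝ}

lemma measurable_indicator_of_continuousOn {α β : Type*} [TopologicalSpace α] [MeasurableSpace α]
    [OpensMeasurableSpace α] [TopologicalSpace β] [MeasurableSpace β] [BorelSpace β] [Zero β]
    {f : α → β} {s : Set α} (hf : ContinuousOn f s) (hs : MeasurableSet s) :
    Measurable (s.indicator f) := by
  classical
  rw [← Set.piecewise_eq_indicator]
  exact hf.measurable_piecewise continuousOn_const hs

lemma lintegral_preimage_tlast_div_sqrt_lt_top (hO : MeasurableSet O) (hvol : volume O ≠ ∞)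
    (hk : Measurable (O.indicator k0)) {M : ℝ} (hM : ∀ t ∈ O, k0 t ≤ M) :
    ∫⁻ z in tlast (n := n) ⁻¹' O,
      ENNReal.ofReal (k0 (tlast z) / √(k0 (tlast z) ^ 2 - ‖xpart z‖ ^ 2)) < ∞ := by
  let W (x : EuclideanSpace ℝ (Fin n)) (t : ℝ) : ℝ≥0∞ :=
    ENNReal.ofReal (O.indicator k0 t / √(O.indicator k0 t ^ 2 - ‖x‖ ^ 2))
  have hW : Measurable (Function.uncurry W) := by
    have : Measurable fun p : EuclideanSpace ℝ (Fin n) × ℝ ↦ O.indicator k0 p.2 :=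
      hk.comp measurable_snd
    fun_prop
  let C : ℝ≥0∞ := ENNReal.ofReal (M ^ Module.finrank ℝ (EuclideanSpace ℝ (Fin n)) *
    ∫ x : EuclideanSpace ℝ (Fin n), 1 / √(1 - ‖x‖ ^ 2))
  have hslice (t : ℝ) : ∫⁻ x, W x t ≤ O.indicator (fun _ ↦ C) t := by
    by_cases ht : t ∈ O
    · simp only [W, Set.indicator_of_mem ht]
      exact lintegral_div_sqrt_sq_sub_norm_sq_le volume (hM t ht)
    · simp [W, ht]
  calc ∫⁻ z in tlast (n := n) ⁻¹' O,
        ENNReal.ofReal (k0 (tlast z) / √(k0 (tlast z) ^ 2 - ‖xpart z‖ ^ 2))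
      = ∫⁻ z in tlast (n := n) ⁻¹' O, W (xpart z) (tlast z) :=
        setLIntegral_congr_fun (measurable_tlast hO) fun z hz ↦ by
          simp only [W, Set.indicator_of_mem (Set.mem_preimage.1 hz)]
    _ ≤ ∫⁻ z : EuclideanSpace ℝ (Fin (n + 1)), W (xpart z) (tlast z) :=
        setLIntegral_le_lintegral _ _
    _ = ∫⁻ t, ∫⁻ x, W x t := lintegral_xpart_tlast hW
    _ ≤ ∫⁻ t, O.indicator (fun _ ↦ C) t := lintegral_mono hslice
    _ = C * volume O := lintegral_indicator_const hO C
    _ < ∞ := ENNReal.mul_lt_top ENNReal.ofReal_lt_top hvol.lt_top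

lemma measurableSet_Uset_sdiff_preimage_tlast (hS : MeasurableSet S)
    (hk : Measurable ((Set.Icc 0 L \ S).indicator k0)) :
    MeasurableSet (Uset (n := n) L k0 \ tlast ⁻¹' S) := by
  have hU : Uset (n := n) L k0 \ tlast ⁻¹' S = tlast ⁻¹' (Set.Icc 0 L \ S) ∩
      {z | ‖xpart z‖ < (Set.Icc 0 L \ S).indicator k0 (tlast z)} := by
    ext z
    refine and_right_comm.trans (and_congr_right fun hz ↦ ?_)
    rw [Set.mem_ofPred_eq, Set.indicator_of_mem (show tlast z ∈ Set.Icc 0 L \ S from hz)]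
  rw [hU]
  exact (measurable_tlast (measurableSet_Icc.diff hS)).inter
    (measurableSet_lt measurable_xpart.norm (hk.comp measurable_tlast))

lemma lintegral_abs_det_fderiv_Tmap_ne_top {s : ℝ → EuclideanSpace ℝ (Fin (n + 1))}
    {R : ℝ → EuclideanSpace ℝ (Fin (n + 1)) →L[ℝ] EuclideanSpace ℝ (Fin (n + 1))} {M : ℝ}
    (hS : MeasurableSet S) (hk : ∀ t ∈ Set.Icc 0 L \ S, HasBoundedDerivAt k0 M t)
    (hs : ∀ t ∈ Set.Icc 0 L \ S, HasBoundedDerivAt s M t)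
    (hR : ∀ t ∈ Set.Icc 0 L \ S, HasBoundedDerivAt R M t) :
    ∫⁻ z in Uset L k0 \ tlast ⁻¹' S, ENNReal.ofReal |(fderiv ℝ (Tmap k0 s R) z).det| ≠ ∞ := by
  obtain ⟨C, hC⟩ := exists_forall_abs_det_fderiv_Tmap_le n M
  have hO : MeasurableSet (Set.Icc 0 L \ S) := measurableSet_Icc.diff hS
  have hind : Measurable ((Set.Icc 0 L \ S).indicator k0) := measurable_indicator_of_continuousOn
    (fun t ht ↦ (hk t ht).1.continuousAt.continuousWithinAt) hO
  have hvol : volume (Set.Icc 0 L \ S) ≠ ∞ :=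
    measure_ne_top_of_subset Set.sdiff_subset measure_Icc_lt_top.ne
  have hsub : Uset (n := n) L k0 \ tlast ⁻¹' S ⊆ tlast ⁻¹' (Set.Icc 0 L \ S) :=
    fun z hz ↦ ⟨hz.1.1, hz.2⟩
  refine ne_top_of_le_ne_top (ENNReal.mul_ne_top (ENNReal.ofReal_ne_top (r := C))
    (lintegral_preimage_tlast_div_sqrt_lt_top (n := n) hO hvol hind
      fun t ht ↦ (Real.le_norm_self _).trans (hk t ht).2.1).ne) ?_
  rw [← lintegral_const_mul' _ _ ENNReal.ofReal_ne_top]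
  calc ∫⁻ z in Uset L k0 \ tlast ⁻¹' S, ENNReal.ofReal |(fderiv ℝ (Tmap k0 s R) z).det|
      ≤ ∫⁻ z in Uset L k0 \ tlast ⁻¹' S, ENNReal.ofReal C *
          ENNReal.ofReal (k0 (tlast z) / √(k0 (tlast z) ^ 2 - ‖xpart z‖ ^ 2)) := by
        refine setLIntegral_mono' (measurableSet_Uset_sdiff_preimage_tlast hS hind) fun z hz ↦ ?_
        have hpos : 0 < k0 (tlast z) := (norm_nonneg _).trans_lt hz.1.2
        rw [← ENNReal.ofReal_mul' (by positivity)]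
        exact ENNReal.ofReal_le_ofReal
          (hC (hk _ (hsub hz)) (hs _ (hsub hz)) (hR _ (hsub hz)) hz.1.2)
    _ ≤ _ := lintegral_mono_set hsub

end Integrability

section ExceptionalSlices

variable {n : ℕ} {S : Set ℝ}

lemma Tmap_mem_image_sphere {k0 : ℝ → ℝ} (s : ℝ → EuclideanSpace ℝ (Fin (n + 1)))
    (R : ℝ → EuclideanSpace ℝ (Fin (n + 1)) →L[ℝ] EuclideanSpace ℝ (Fin (n + 1)))
    {z : EuclideanSpace ℝ (Fin (n + 1))} (hz : ‖xpart z‖ ≤ k0 (tlast z)) :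
    Tmap k0 s R z ∈
      R (tlast z) '' Metric.sphere (-(k0 (tlast z) • s (tlast z))) (k0 (tlast z)) :=
  ⟨_, by rw [mem_sphere_iff_norm, sub_neg_eq_add, sub_add_cancel, norm_hvec_sqrt_sq_sub hz], rfl⟩

lemma volume_Tmap_image_Uset_inter_preimage_tlast (L : ℝ) (k0 : ℝ → ℝ)
    (s : ℝ → EuclideanSpace ℝ (Fin (n + 1)))
    (R : ℝ → EuclideanSpace ℝ (Fin (n + 1)) →L[ℝ] EuclideanSpace ℝ (Fin (n + 1)))
    (hS : S.Countable) :
    volume (Tmap k0 s R '' (Uset L k0 ∩ tlast ⁻¹' S)) = 0 := by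
  have hnull (t : ℝ) : volume (R t '' Metric.sphere (-(k0 t • s t)) (k0 t)) = 0 := by
    rw [Measure.addHaar_image_continuousLinearMap, Measure.addHaar_sphere, mul_zero]
  refine measure_mono_null ?_ ((measure_biUnion_null_iff hS).2 fun t _ ↦ hnull t)
  rintro _ ⟨z, ⟨hzU, hzS⟩, rfl⟩
  exact Set.mem_biUnion hzS (Tmap_mem_image_sphere s R hzU.2.le)

end ExceptionalSlices

theorem Tmap_area_formula_general (n : ℕ) (L : ℝ) (k0 : ℝ → ℝ)
    (s : ℝ → EuclideanSpace ℝ (Fin (n + 1)))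
    (R : ℝ → EuclideanSpace ℝ (Fin (n + 1)) →L[ℝ] EuclideanSpace ℝ (Fin (n + 1)))
    (hdiff : ∃ (Ex : Finset ℝ) (M : ℝ), ∀ t ∈ Set.Icc (0 : ℝ) L \ (Ex : Set ℝ),
      (DifferentiableAt ℝ k0 t ∧ |deriv k0 t| ≤ M) ∧
      (DifferentiableAt ℝ s t ∧ ‖deriv s t‖ ≤ M) ∧
      (DifferentiableAt ℝ R t ∧ ‖deriv R t‖ ≤ M)) :
    (∀ᵐ z ∂(volume.restrict (Uset L k0)), DifferentiableAt ℝ (Tmap k0 s R) z) ∧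
    IntegrableOn (fun z ↦ |(fderiv ℝ (Tmap k0 s R) z).det|) (Uset L k0) volume ∧
    (∫⁻ z in Uset L k0, ENNReal.ofReal |(fderiv ℝ (Tmap k0 s R) z).det| =
      ∫⁻ y : EuclideanSpace ℝ (Fin (n + 1)),
        ENat.toENNReal ((Tmap k0 s R ⁻¹' {y} ∩ Uset L k0).encard)) ∧
    (∀ᵐ y : EuclideanSpace ℝ (Fin (n + 1)), (Tmap k0 s R ⁻¹' {y} ∩ Uset L k0).Finite) := by
  obtain ⟨Ex, M, h⟩ := hdiff
  have hIcc := Metric.isBounded_Icc (0 : ℝ) L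
  obtain ⟨Ck, hk⟩ := exists_forall_hasBoundedDerivAt (convex_Icc 0 L) hIcc Ex
    fun t ht ↦ (h t ht).1
  obtain ⟨Cs, hs⟩ := exists_forall_hasBoundedDerivAt (convex_Icc 0 L) hIcc Ex
    fun t ht ↦ (h t ht).2.1
  obtain ⟨CR, hR⟩ := exists_forall_hasBoundedDerivAt (convex_Icc 0 L) hIcc Ex
    fun t ht ↦ (h t ht).2.2
  have hind := measurable_indicator_of_continuousOn
    (fun t ht ↦ (hk t ht).1.continuousAt.continuousWithinAt)
    (measurableSet_Icc.diff Ex.measurableSet)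
  have hexc : Uset (n := n) L k0 \ (Uset L k0 \ tlast ⁻¹' Ex) = Uset L k0 ∩ tlast ⁻¹' Ex :=
    Set.sdiff_sdiff_right_self _ _
  refine area_formula_of_differentiableAt_of_negligible_diff
    (measurableSet_Uset_sdiff_preimage_tlast Ex.measurableSet hind) Set.sdiff_subset ?_ ?_ ?_ ?_
  · rw [hexc]
    exact measure_mono_null Set.inter_subset_right
      (volume_preimage_tlast_of_countable Ex.countable_toSet)
  · rw [hexc]
    exact volume_Tmap_image_Uset_inter_preimage_tlast L k0 s R Ex.countable_toSet
  · intro z hz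
    have ht : tlast z ∈ Set.Icc 0 L \ (Ex : Set ℝ) := ⟨hz.1.1, hz.2⟩
    exact (hasFDerivAt_Tmap (hk _ ht).1 (hs _ ht).1 (hR _ ht).1 hz.1.2).differentiableAt
  · exact lintegral_abs_det_fderiv_Tmap_ne_top Ex.measurableSet
      (M := max Ck (max Cs CR)) (fun t ht ↦ (hk t ht).mono (by simp))
      (fun t ht ↦ (hs t ht).mono (by simp))
      (fun t ht ↦ (hR t ht).mono (by simp))

/-- Area formula / Banach indicatrix for the coordinate transformation `T`: the total
derivative of `T` exists a.e. on `U`, its Jacobian determinant is integrable on `U`, its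
integral equals the integral over `ℝ^{n+1}` of the cardinality of the fibres of `T` (over `U`),
and in particular almost every fibre is finite. -/
theorem Tmap_area_formula (n : ℕ) (hn : 1 ≤ n) (L : ℝ) (hL : 0 < L)
    (k0 : ℝ → ℝ) (s : ℝ → EuclideanSpace ℝ (Fin (n + 1)))
    (R : ℝ → EuclideanSpace ℝ (Fin (n + 1)) →L[ℝ] EuclideanSpace ℝ (Fin (n + 1)))
    (hk0pos : ∀ t ∈ Set.Icc (0 : ℝ) L, 0 < k0 t)
    (hk0bdd : ∃ M : ℝ, ∀ t ∈ Set.Icc (0 : ℝ) L, k0 t ≤ M)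
    (hs : ∀ t ∈ Set.Icc (0 : ℝ) L, ‖s t‖ = 1)
    (hR : ∀ t ∈ Set.Icc (0 : ℝ) L,
      (ContinuousLinearMap.adjoint (R t)).comp (R t) =
        ContinuousLinearMap.id ℝ (EuclideanSpace ℝ (Fin (n + 1))) ∧
      LinearMap.det ((R t) : EuclideanSpace ℝ (Fin (n + 1)) →ₗ[ℝ] EuclideanSpace ℝ (Fin (n + 1)))
        = 1)
    (hC1 : ∃ (Ex : Finset ℝ) (M : ℝ), ∀ t ∈ Set.Icc (0 : ℝ) L \ (Ex : Set ℝ),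
      (ContDiffAt ℝ 1 k0 t ∧ |deriv k0 t| ≤ M) ∧
      (ContDiffAt ℝ 1 s t ∧ ‖deriv s t‖ ≤ M) ∧
      (ContDiffAt ℝ 1 R t ∧ ‖deriv R t‖ ≤ M)) :
    (∀ᵐ z ∂(volume.restrict (Uset L k0)), DifferentiableAt ℝ (Tmap k0 s R) z) ∧
    IntegrableOn
      (fun z => |LinearMap.det ((fderiv ℝ (Tmap k0 s R) z :
        EuclideanSpace ℝ (Fin (n + 1)) →ₗ[ℝ] EuclideanSpace ℝ (Fin (n + 1))))|)
      (Uset L k0) volume ∧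
    (∫⁻ z in Uset L k0,
        ENNReal.ofReal |LinearMap.det ((fderiv ℝ (Tmap k0 s R) z :
          EuclideanSpace ℝ (Fin (n + 1)) →ₗ[ℝ] EuclideanSpace ℝ (Fin (n + 1))))| =
      ∫⁻ y : EuclideanSpace ℝ (Fin (n + 1)),
        ENat.toENNReal ((Tmap k0 s R ⁻¹' {y} ∩ Uset L k0).encard)) ∧
    (∀ᵐ y : EuclideanSpace ℝ (Fin (n + 1)), (Tmap k0 s R ⁻¹' {y} ∩ Uset L k0).Finite) := by
  obtain ⟨Ex, M, h⟩ := hC1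
  exact Tmap_area_formula_general n L k0 s R ⟨Ex, M, fun t ht ↦
    (h t ht).imp (And.imp_left fun hk ↦ hk.differentiableAt one_ne_zero) (And.imp
      (And.imp_left fun hs ↦ hs.differentiableAt one_ne_zero)
      (And.imp_left fun hR ↦ hR.differentiableAt one_ne_zero))⟩

end
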